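/- Fix μ ∈ ℝ^n. Let U be a block-diagonal orthogonal matrix (U^{ij} = 0 whenever μ_i ≠ μ_j), H an arbitrary n×n matrix, σ a permutation on {1,…,k}, and l ∈ {1,…,k}. (1) If T is a (k+1)-tensor with T^{p₁…p_{k+1}} = 0 whenever μ_{p_l} = μ_{p_{k+1}}, then (U(Diag^{σ_{(l)}} T)Uᵀ)[H_in] = 0. (2) If T is a (k+1)-tensor with T^{p₁…p_{k+1}} = 0 whenever μ_{p_l} ≠ μ_{p_{k+1}}, then (U(Diag^{σ_{(l)}} T)Uᵀ)[H_out] = 0. (3) For any (k+1)-tensor T, (U(Diag^{σ_{(k+1)}} T)Uᵀ)[H_out] = 0. Here, for a 2(k+1)-tensor S viewed as a (k+1)-tensor on matrices, S[H] denotes fixing the last matrix argument to H; the conclusions say these 2k-tensors vanish identically. -/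

import Mathlib

open scoped BigOperators
open Filter Asymptotics Matrix

attribute [local instance] Matrix.normedAddCommGroup

noncomputable section

/-- A `k`-tensor on `ℝ^n`, identified with its array of entries. -/
abbrev Tensor (k n : ℕ) : Type := (Fin k → Fin n) → ℝ

/-- A `2k`-tensor on `ℝ^n`, with its indices grouped into two groups of `k`. -/
abbrev Tensor2 (k n : ℕ) : Type := (Fin k → Fin n) → (Fin k → Fin n) → ℝ

/-- The `σ`-Hadamard product of `k` matrices:
`(H₁ ∘_σ ⋯ ∘_σ H_k)^{i₁…i_k} = ∏ s, H_s^{i_s i_{σ⁻¹(s)}}`. -/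
def hadamardProd {k n : ℕ} (σ : Equiv.Perm (Fin k))
    (H : Fin k → Matrix (Fin n) (Fin n) ℝ) : Tensor k n :=
  fun i => ∏ s, H s (i s) (i (σ⁻¹ s))

/-- The dot product of two `k`-tensors. -/
def tdot {k n : ℕ} (T₁ T₂ : Tensor k n) : ℝ :=
  ∑ p : Fin k → Fin n, T₁ p * T₂ p

/-- `Diag^σ T`, the `2k`-tensor equal to `T^{i₁…i_k}` when `i_s = j_{σ(s)}` for all `s`,
and `0` otherwise. -/
def diagPerm {k n : ℕ} (σ : Equiv.Perm (Fin k)) (T : Tensor k n) : Tensor2 k n :=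
  fun i j => if ∀ s, i s = j (σ s) then T i else 0

/-- A `2k`-tensor viewed as a `k`-tensor on matrix arguments:
`S[H₁,…,H_k] = ∑_{p,q} S^{p₁…p_k}_{q₁…q_k} ∏ s, H_s^{p_s q_s}`. -/
def apply2 {k n : ℕ} (S : Tensor2 k n)
    (H : Fin k → Matrix (Fin n) (Fin n) ℝ) : ℝ :=
  ∑ p : Fin k → Fin n, ∑ q : Fin k → Fin n, S p q * ∏ s, H s (p s) (q s)

/-- Conjugation `U S Uᵀ` of a `2k`-tensor `S` by a matrix `U`. -/
def conj2 {k n : ℕ} (U : Matrix (Fin n) (Fin n) ℝ) (S : Tensor2 k n) : Tensor2 k n :=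
  fun i j => ∑ p : Fin k → Fin n, ∑ q : Fin k → Fin n,
    S p q * ((∏ s, U (i s) (p s)) * ∏ s, U (j s) (q s))

/-- For a `2(k+1)`-tensor `S` viewed as a `(k+1)`-tensor on matrices, `S[H]` fixes the last
matrix argument to `H`, producing a `2k`-tensor. -/
def lastApply {k n : ℕ} (S : Tensor2 (k+1) n)
    (H : Matrix (Fin n) (Fin n) ℝ) : Tensor2 k n :=
  fun i j => ∑ a : Fin n, ∑ b : Fin n, S (Fin.snoc i a) (Fin.snoc j b) * H a b

/-- `T[x]`: contraction of the last index of a `(k+1)`-tensor against a vector. -/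
def contract {k n : ℕ} (T : Tensor (k+1) n) (x : Fin n → ℝ) : Tensor k n :=
  fun i => ∑ a : Fin n, T (Fin.snoc i a) * x a

/-- A permutation `σ` of `{1,…,k}` viewed as a permutation of `{1,…,k+1}` fixing `k+1`. -/
def extPerm {k : ℕ} (σ : Equiv.Perm (Fin k)) : Equiv.Perm (Fin (k+1)) :=
  (Equiv.permCongr finSuccEquivLast).symm σ.optionCongr

/-- `σ_{(l)} := σ ∘ τ_l`, where `τ_l` is the transposition `(l, k+1)` (and `σ` fixes `k+1`).
Here `l : Fin (k+1)`; taking `l = Fin.last k` gives `σ_{(k+1)} = σ`. -/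
def permIns {k : ℕ} (σ : Equiv.Perm (Fin k)) (l : Fin (k+1)) : Equiv.Perm (Fin (k+1)) :=
  extPerm σ * Equiv.swap l (Fin.last k)

/-- A tensor is `μ`-block-constant if its entries agree on componentwise `μ`-equivalent
multi-indices (`i ∼ j` iff `μ i = μ j`). -/
def BlockConstant {k n : ℕ} (μ : Fin n → ℝ) (T : Tensor k n) : Prop :=
  ∀ i j : Fin k → Fin n, (∀ s, μ (i s) = μ (j s)) → T i = T j

/-- `H_in`: the diagonal-block part of `H` (w.r.t. the blocks of `μ`). -/
def matIn {n : ℕ} (μ : Fin n → ℝ) (H : Matrix (Fin n) (Fin n) ℝ) :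
    Matrix (Fin n) (Fin n) ℝ :=
  Matrix.of fun i j => if μ i = μ j then H i j else 0

/-- `H_out = H - H_in`: the off-diagonal-block part of `H`. -/
def matOut {n : ℕ} (μ : Fin n → ℝ) (H : Matrix (Fin n) (Fin n) ℝ) :
    Matrix (Fin n) (Fin n) ℝ :=
  H - matIn μ H

/-- The divided-difference tensor `T^{(l)}_out` of a `k`-tensor `T`, a `(k+1)`-tensor. -/
def outDD {k n : ℕ} (μ : Fin n → ℝ) (T : Tensor k n) (l : Fin k) : Tensor (k+1) n :=
  fun i => if μ (i l.castSucc) = μ (i (Fin.last k)) then 0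
    else (T (Function.update (fun s => i s.castSucc) l (i (Fin.last k)))
          - T (fun s => i s.castSucc)) / (μ (i (Fin.last k)) - μ (i l.castSucc))

/-- `T^{τ_l}`: the `(k+1)`-tensor equal to `T^{i₁…i_k}` on the hyperplane `i_l = i_{k+1}`
and `0` elsewhere. -/
def liftTau {k n : ℕ} (T : Tensor k n) (l : Fin k) : Tensor (k+1) n :=
  fun i => if i l.castSucc = i (Fin.last k) then T (fun s => i s.castSucc) else 0

/-- `T^{τ_l}_in`: the "inflated" `(k+1)`-tensor, equal to
`T^{i₁…i_{l-1} i_{k+1} i_{l+1}…i_k}` when `μ_{i_l} = μ_{i_{k+1}}` and `0` otherwise. -/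
def liftTauIn {k n : ℕ} (μ : Fin n → ℝ) (T : Tensor k n) (l : Fin k) : Tensor (k+1) n :=
  fun i => if μ (i l.castSucc) = μ (i (Fin.last k))
    then T (Function.update (fun s => i s.castSucc) l (i (Fin.last k))) else 0

/-- `lam` is the map sending each symmetric matrix to the vector of its eigenvalues
ordered nonincreasingly: it is nonincreasing and realized by an orthogonal
diagonalization. -/
def IsEigCF {n : ℕ} (lam : Matrix (Fin n) (Fin n) ℝ → Fin n → ℝ) : Prop :=
  ∀ A : Matrix (Fin n) (Fin n) ℝ, A.IsSymm →
    Antitone (lam A) ∧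
    ∃ U : Matrix (Fin n) (Fin n) ℝ, Uᵀ * U = 1 ∧
      A = U * Matrix.diagonal (lam A) * Uᵀ

/-- `h` is the concatenated vector `(λ(X₁ᵀ A X₁), …, λ(X_rᵀ A X_r))` of the nonincreasingly
ordered eigenvalues of the diagonal blocks of `A` (blocks determined by `μ`):
equivalently, `h` is nonincreasing within each block of `μ` and `Diag h` is obtained from
`A_in` by conjugating with a block-diagonal orthogonal matrix. -/
def IsBlockEig {n : ℕ} (μ : Fin n → ℝ) (A : Matrix (Fin n) (Fin n) ℝ)
    (h : Fin n → ℝ) : Prop :=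
  (∀ i j : Fin n, i ≤ j → μ i = μ j → h j ≤ h i) ∧
  ∃ V : Matrix (Fin n) (Fin n) ℝ, Vᵀ * V = 1 ∧
    (∀ i j, μ i ≠ μ j → V i j = 0) ∧
    Vᵀ * matIn μ A * V = Matrix.diagonal h

/-- Termwise vanishing: an index pair contributes only if its last indices lie in the blocks of
`p (last)` and `q (last)`. -/
theorem lastApply_conj2_diagPerm_eq_zero {n k : ℕ} (μ : Fin n → ℝ)
    (U : Matrix (Fin n) (Fin n) ℝ)
    (hUb : ∀ i j : Fin n, μ i ≠ μ j → U i j = 0)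
    (G : Matrix (Fin n) (Fin n) ℝ) (π : Equiv.Perm (Fin (k+1))) (m : Fin (k+1))
    (hm : π m = Fin.last k) (T : Tensor (k+1) n)
    (hT : ∀ (p : Fin (k+1) → Fin n) (a b : Fin n), μ a = μ (p (Fin.last k)) →
      μ b = μ (p m) → T p = 0 ∨ G a b = 0) :
    lastApply (conj2 U (diagPerm π T)) G = 0 := by
  funext i j
  simp only [lastApply, conj2, Pi.zero_apply]
  refine Finset.sum_eq_zero fun a _ => Finset.sum_eq_zero fun b _ => ?_
  rw [Finset.sum_mul]
  refine Finset.sum_eq_zero fun p _ => ?_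
  rw [Finset.sum_mul]
  refine Finset.sum_eq_zero fun q _ => ?_
  rw [Fin.prod_univ_castSucc, Fin.prod_univ_castSucc]
  simp only [Fin.snoc_last, diagPerm]
  split_ifs with h
  · by_cases ha : μ a = μ (p (Fin.last k))
    · by_cases hb : μ b = μ (q (Fin.last k))
      · have hp := h m
        rw [hm] at hp
        rw [← hp] at hb
        rcases hT p a b ha hb with h0 | h0 <;> simp [h0]
      · simp [hUb _ _ hb]
    · simp [hUb _ _ ha]
  · simp

theorem extPerm_last {k : ℕ} (σ : Equiv.Perm (Fin k)) : extPerm σ (Fin.last k) = Fin.last k := by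
  simp [extPerm, Equiv.permCongr_symm_apply]

theorem permIns_self {k : ℕ} (σ : Equiv.Perm (Fin k)) (l : Fin (k+1)) :
    permIns σ l l = Fin.last k := by
  simp [permIns, extPerm_last]

/-- Proposition `dec15b`. Fix `μ`. Let `U` be a block-diagonal
orthogonal matrix, `H` arbitrary, `σ` a permutation of `{1,…,k}`, `l ∈ {1,…,k}`.
(1) If `T^{p₁…p_{k+1}} = 0` whenever `μ_{p_l} = μ_{p_{k+1}}`, then
`(U(Diag^{σ_{(l)}}T)Uᵀ)[H_in] = 0`.
(2) If `T^{p₁…p_{k+1}} = 0` whenever `μ_{p_l} ≠ μ_{p_{k+1}}`, then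
`(U(Diag^{σ_{(l)}}T)Uᵀ)[H_out] = 0`.
(3) For any `(k+1)`-tensor `T`, `(U(Diag^{σ_{(k+1)}}T)Uᵀ)[H_out] = 0`. -/
theorem statement14 {n k : ℕ} (μ : Fin n → ℝ)
    (U : Matrix (Fin n) (Fin n) ℝ) (hU : Uᵀ * U = 1)
    (hUb : ∀ i j : Fin n, μ i ≠ μ j → U i j = 0)
    (H : Matrix (Fin n) (Fin n) ℝ) (σ : Equiv.Perm (Fin k)) (l : Fin k) :
    (∀ T : Tensor (k+1) n,
        (∀ p : Fin (k+1) → Fin n, μ (p l.castSucc) = μ (p (Fin.last k)) → T p = 0) →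
        lastApply (conj2 U (diagPerm (permIns σ l.castSucc) T)) (matIn μ H) = 0) ∧
    (∀ T : Tensor (k+1) n,
        (∀ p : Fin (k+1) → Fin n, μ (p l.castSucc) ≠ μ (p (Fin.last k)) → T p = 0) →
        lastApply (conj2 U (diagPerm (permIns σ l.castSucc) T)) (matOut μ H) = 0) ∧
    (∀ T : Tensor (k+1) n,
        lastApply (conj2 U (diagPerm (extPerm σ) T)) (matOut μ H) = 0) := by
  refine ⟨fun T hT => ?_, fun T hT => ?_, fun T => ?_⟩
  · refine lastApply_conj2_diagPerm_eq_zero μ U hUb _ _ _ (permIns_self σ _) T ?_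
    intro p a b ha hb
    by_cases hab : μ a = μ b
    · exact Or.inl (hT p (by rw [← ha, ← hb, hab]))
    · exact Or.inr (by simp [matIn, hab])
  · refine lastApply_conj2_diagPerm_eq_zero μ U hUb _ _ _ (permIns_self σ _) T ?_
    intro p a b ha hb
    by_cases hab : μ a = μ b
    · exact Or.inr (by simp [matOut, matIn, hab])
    · exact Or.inl (hT p (by rw [← ha, ← hb]; exact fun h => hab h.symm))
  · refine lastApply_conj2_diagPerm_eq_zero μ U hUb _ _ _ (extPerm_last σ) T ?_
    intro p a b ha hb
    exact Or.inr (by simp [matOut, matIn, ha.trans hb.symm])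

end
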